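/- arXiv:1406.5441 — 3 statements merged into one kernel-verified Lean document; each statement's English description precedes it below -/
import Mathlib

section
/- Let d be a positive integer, M ∈ ℂ^{d×d} an Hermitian matrix with eigenvalues λ₁ ≥ … ≥ λ_d, c ∈ ℝ, and a ∈ ℂ^d. Let A be the (d+1)×(d+1) Hermitian bordered matrix A = [[c, a*], [a, M]] and set η₁ = |c − λ₁|. Then λ_max(A) − max(c, λ₁) ≤ 2‖a‖₂² / (η₁ + √(η₁² + 4‖a‖₂²)). -/
/-!
Bounding the cross term of the quadratic form of `A = [[c, a*], [a, M]]` by Cauchy–Schwarz and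
`M` by `λ₁` shows that this form at `(x, y)` is at most that of the real `2 × 2` matrix
`[[c, ‖a‖], [‖a‖, λ₁]]` at `(|x|, ‖y‖)`. Hence `λ_max(A)` is at most the larger root of
`(r - c) (r - λ₁) = ‖a‖²`, which exceeds `max c λ₁` by the nonnegative root `g` of
`g (g + η₁) = ‖a‖²`.
-/

section LevelShift

/-- The nonnegative root `g` of `g * (g + η) = t ^ 2`, for `0 ≤ η`: the amount by which a
coupling `t` raises the upper one of two energy levels at distance `η`. The rationalised form
has denominator `0` only at `η = t = 0`, where the root is `0` as well. -/
noncomputable def levelShift (η t : ℝ) : ℝ :=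
  2 * t ^ 2 / (η + Real.sqrt (η ^ 2 + 4 * t ^ 2))

lemma levelShift_nonneg {η : ℝ} (hη : 0 ≤ η) (t : ℝ) : 0 ≤ levelShift η t := by
  unfold levelShift
  positivity

lemma levelShift_mul_levelShift_add {η : ℝ} (hη : 0 ≤ η) (t : ℝ) :
    levelShift η t * (levelShift η t + η) = t ^ 2 := by
  rcases eq_or_ne t 0 with rfl | ht
  · simp [levelShift]
  unfold levelShift
  have hsqrt : Real.sqrt (η ^ 2 + 4 * t ^ 2) ^ 2 = η ^ 2 + 4 * t ^ 2 :=
    Real.sq_sqrt (by positivity)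
  have hden : 0 < η + Real.sqrt (η ^ 2 + 4 * t ^ 2) := by positivity
  generalize Real.sqrt (η ^ 2 + 4 * t ^ 2) = s at hsqrt hden
  field_simp
  linear_combination -hsqrt

lemma max_add_levelShift_sub_mul_sub (c l t : ℝ) :
    (max c l + levelShift |c - l| t - c) * (max c l + levelShift |c - l| t - l) = t ^ 2 := by
  rw [← levelShift_mul_levelShift_add (abs_nonneg (c - l)) t]
  rcases le_total c l with h | h
  · rw [max_eq_right h, abs_of_nonpos (sub_nonpos.mpr h)]
    ring
  · rw [max_eq_left h, abs_of_nonneg (sub_nonneg.mpr h)]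
    ring

lemma two_mul_mul_mul_le_of_mul_eq_sq {α β t : ℝ} (hα : 0 ≤ α) (hβ : 0 ≤ β)
    (h : α * β = t ^ 2) (u v : ℝ) : 2 * (t * u * v) ≤ α * u ^ 2 + β * v ^ 2 := by
  refine le_of_sq_le_sq ?_ (by positivity)
  calc (2 * (t * u * v)) ^ 2 = 4 * (α * u ^ 2) * (β * v ^ 2) := by
        linear_combination -4 * u ^ 2 * v ^ 2 * h
    _ ≤ (α * u ^ 2 + β * v ^ 2) ^ 2 := four_mul_le_sq_add _ _

lemma quadraticForm_le_max_add_levelShift (c l t u v : ℝ) :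
    c * u ^ 2 + 2 * (t * u * v) + l * v ^ 2 ≤
      (max c l + levelShift |c - l| t) * (u ^ 2 + v ^ 2) := by
  have hshift : 0 ≤ levelShift |c - l| t := levelShift_nonneg (abs_nonneg _) t
  have hcross := two_mul_mul_mul_le_of_mul_eq_sq
    (by linarith [le_max_left c l]) (by linarith [le_max_right c l])
    (max_add_levelShift_sub_mul_sub c l t) u v
  linarith

end LevelShift

variable {𝕜 n : Type*} [RCLike 𝕜] [Fintype n]

open scoped MatrixOrder in
theorem forall_eigenvalues_le_iff_re_inner_le [DecidableEq n] {A : Matrix n n 𝕜}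
    (hA : A.IsHermitian) {r : ℝ} :
    (∀ i, hA.eigenvalues i ≤ r) ↔
      ∀ v, RCLike.re (inner 𝕜 v (A.toEuclideanLin v)) ≤ r * ‖v‖ ^ 2 := by
  have hspectrum : (∀ i, hA.eigenvalues i ≤ r) ↔ A ≤ algebraMap ℝ (Matrix n n 𝕜) r := by
    rw [le_algebraMap_iff_spectrum_le hA.isSelfAdjoint, hA.spectrum_real_eq_range_eigenvalues,
      Set.forall_mem_range]
  have hsymm : (algebraMap ℝ (Matrix n n 𝕜) r - A).toEuclideanLin.IsSymmetric :=
    Matrix.isSymmetric_toEuclideanLin_iff.mpr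
      ((IsSelfAdjoint.algebraMap _ (.all r)).sub hA.isSelfAdjoint)
  have hform (v : EuclideanSpace 𝕜 n) :
      RCLike.re (inner 𝕜 ((algebraMap ℝ (Matrix n n 𝕜) r - A).toEuclideanLin v) v) =
        r * ‖v‖ ^ 2 - RCLike.re (inner 𝕜 v (A.toEuclideanLin v)) := by
    have happly : (algebraMap ℝ (Matrix n n 𝕜) r - A).toEuclideanLin v =
        (r : 𝕜) • v - A.toEuclideanLin v := by
      rw [map_sub, LinearMap.sub_apply, Algebra.algebraMap_eq_smul_one]
      ext i
      simp [Matrix.toLpLin_apply, Matrix.smul_mulVec, RCLike.real_smul_eq_coe_mul]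
    rw [happly, inner_re_symm, inner_sub_right, inner_smul_right, map_sub, RCLike.re_ofReal_mul,
      inner_self_eq_norm_sq]
  rw [hspectrum, Matrix.le_iff, ← Matrix.isPositive_toEuclideanLin_iff, LinearMap.IsPositive,
    and_iff_right hsymm]
  simp only [hform, sub_nonneg]

/-- The bordered matrix `[[c, a*], [a, M]]`, the corner being indexed by `Unit`. -/
def borderedMatrix (c : ℝ) (a : EuclideanSpace 𝕜 n) (M : Matrix n n 𝕜) :
    Matrix (Unit ⊕ n) (Unit ⊕ n) 𝕜 :=
  Matrix.fromBlocks (Matrix.of fun _ _ => (c : 𝕜)) (Matrix.of fun _ j => star (a j))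
    (Matrix.of fun i _ => a i) M

/-- The part `y` of a vector `(x, y)` that the block `M` of a bordered matrix acts on. -/
def borderTail (v : EuclideanSpace 𝕜 (Unit ⊕ n)) : EuclideanSpace 𝕜 n :=
  WithLp.toLp 2 fun j => v (Sum.inr j)

lemma norm_sq_eq_add_norm_sq_borderTail (v : EuclideanSpace 𝕜 (Unit ⊕ n)) :
    ‖v‖ ^ 2 = ‖v (Sum.inl ())‖ ^ 2 + ‖borderTail v‖ ^ 2 := by
  simp [EuclideanSpace.norm_sq_eq, borderTail]

lemma inner_borderedMatrix [DecidableEq n] (c : ℝ) (a : EuclideanSpace 𝕜 n) (M : Matrix n n 𝕜)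
    (v : EuclideanSpace 𝕜 (Unit ⊕ n)) :
    inner 𝕜 v ((borderedMatrix c a M).toEuclideanLin v) =
      inner 𝕜 (v (Sum.inl ())) ((c : 𝕜) * v (Sum.inl ()) + inner 𝕜 a (borderTail v)) +
        inner 𝕜 (borderTail v)
          (v (Sum.inl ()) • a + M.toEuclideanLin (borderTail v)) := by
  have hcorner : (borderedMatrix c a M).toEuclideanLin v (Sum.inl ()) =
      (c : 𝕜) * v (Sum.inl ()) + inner 𝕜 a (borderTail v) := by
    simp [borderedMatrix, borderTail, Matrix.toLpLin_apply, Matrix.mulVec, dotProduct,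
      PiLp.inner_apply, mul_comm]
  have htail : borderTail ((borderedMatrix c a M).toEuclideanLin v) =
      v (Sum.inl ()) • a + M.toEuclideanLin (borderTail v) := by
    ext j
    simp [borderedMatrix, borderTail, Matrix.toLpLin_apply, Matrix.mulVec, dotProduct, mul_comm]
  rw [← hcorner, ← htail]
  simp [PiLp.inner_apply, borderTail]

lemma re_inner_borderedMatrix [DecidableEq n] (c : ℝ) (a : EuclideanSpace 𝕜 n)
    (M : Matrix n n 𝕜) (v : EuclideanSpace 𝕜 (Unit ⊕ n)) :
    RCLike.re (inner 𝕜 v ((borderedMatrix c a M).toEuclideanLin v)) =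
      c * ‖v (Sum.inl ())‖ ^ 2 +
        2 * RCLike.re (inner 𝕜 (borderTail v) (v (Sum.inl ()) • a)) +
        RCLike.re (inner 𝕜 (borderTail v) (M.toEuclideanLin (borderTail v))) := by
  have hcross : inner 𝕜 (v (Sum.inl ())) (inner 𝕜 a (borderTail v)) =
      inner 𝕜 (v (Sum.inl ()) • a) (borderTail v) := by
    rw [inner_smul_left, RCLike.inner_apply, mul_comm]
  have hcorner : inner 𝕜 (v (Sum.inl ())) ((c : 𝕜) * v (Sum.inl ())) =
      (c : 𝕜) * inner 𝕜 (v (Sum.inl ())) (v (Sum.inl ())) := by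
    rw [← smul_eq_mul, inner_smul_right]
  rw [inner_borderedMatrix, inner_add_right, inner_add_right, hcross, hcorner]
  simp only [map_add, RCLike.re_ofReal_mul, inner_self_eq_norm_sq]
  rw [inner_re_symm (v (Sum.inl ()) • a)]
  ring

lemma re_inner_borderedMatrix_le [DecidableEq n] (c : ℝ) (a : EuclideanSpace 𝕜 n)
    {M : Matrix n n 𝕜} {l : ℝ}
    (hM : ∀ y, RCLike.re (inner 𝕜 y (M.toEuclideanLin y)) ≤ l * ‖y‖ ^ 2)
    (v : EuclideanSpace 𝕜 (Unit ⊕ n)) :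
    RCLike.re (inner 𝕜 v ((borderedMatrix c a M).toEuclideanLin v)) ≤
      (max c l + levelShift |c - l| ‖a‖) * ‖v‖ ^ 2 := by
  set x := v (Sum.inl ())
  set y := borderTail v
  have hcross : RCLike.re (inner 𝕜 y (x • a)) ≤ ‖a‖ * ‖x‖ * ‖y‖ :=
    calc RCLike.re (inner 𝕜 y (x • a)) ≤ ‖y‖ * ‖x • a‖ := re_inner_le_norm y (x • a)
      _ = ‖a‖ * ‖x‖ * ‖y‖ := by rw [norm_smul]; ring
  calc RCLike.re (inner 𝕜 v ((borderedMatrix c a M).toEuclideanLin v))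
      = c * ‖x‖ ^ 2 + 2 * RCLike.re (inner 𝕜 y (x • a)) +
          RCLike.re (inner 𝕜 y (M.toEuclideanLin y)) := re_inner_borderedMatrix c a M v
    _ ≤ c * ‖x‖ ^ 2 + 2 * (‖a‖ * ‖x‖ * ‖y‖) + l * ‖y‖ ^ 2 := by gcongr; exact hM y
    _ ≤ (max c l + levelShift |c - l| ‖a‖) * (‖x‖ ^ 2 + ‖y‖ ^ 2) :=
      quadraticForm_le_max_add_levelShift c l ‖a‖ ‖x‖ ‖y‖
    _ = (max c l + levelShift |c - l| ‖a‖) * ‖v‖ ^ 2 := by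
      rw [norm_sq_eq_add_norm_sq_borderTail v]

theorem bordered_lambdaMax_upper_LiLi_general [DecidableEq n] {M : Matrix n n 𝕜}
    (hM : M.IsHermitian) {c l : ℝ} {a : EuclideanSpace 𝕜 n}
    (hA : (borderedMatrix c a M).IsHermitian) (hl : ∀ i, hM.eigenvalues i ≤ l) :
    (⨆ i, hA.eigenvalues i) - max c l ≤
      2 * ‖a‖ ^ 2 / (|c - l| + Real.sqrt (|c - l| ^ 2 + 4 * ‖a‖ ^ 2)) := by
  have heigenvalues : ∀ i, hA.eigenvalues i ≤ max c l + levelShift |c - l| ‖a‖ :=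
    (forall_eigenvalues_le_iff_re_inner_le hA).mpr
      (re_inner_borderedMatrix_le c a ((forall_eigenvalues_le_iff_re_inner_le hM).mp hl))
  exact sub_le_iff_le_add'.mpr (ciSup_le heigenvalues)

/-- **Li–Li upper bound.** With `A = [[c, a*], [a, M]]`, `λ₁ = λ_max(M)` and
`η₁ = |c − λ₁|`, one has
`λ_max(A) − max (c, λ₁) ≤ 2‖a‖₂² / (η₁ + √(η₁² + 4‖a‖₂²))`. -/
theorem bordered_lambdaMax_upper_LiLi
    (d : ℕ) (hd : 0 < d)
    (M : Matrix (Fin d) (Fin d) ℂ) (hM : M.IsHermitian)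
    (c : ℝ) (a : EuclideanSpace ℂ (Fin d))
    (A : Matrix (Unit ⊕ Fin d) (Unit ⊕ Fin d) ℂ)
    (hA : A = Matrix.fromBlocks (Matrix.of fun _ _ => (c : ℂ))
        (Matrix.of fun _ j => star (a j)) (Matrix.of fun i _ => a i) M)
    (hAh : A.IsHermitian)
    (lam1 : ℝ) (hlam1 : lam1 = ⨆ i, hM.eigenvalues i)
    (eta1 : ℝ) (heta1 : eta1 = |c - lam1|) :
    (⨆ i, hAh.eigenvalues i) - max c lam1
      ≤ 2 * ‖a‖ ^ 2 / (eta1 + Real.sqrt (eta1 ^ 2 + 4 * ‖a‖ ^ 2)) := by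
  subst hA heta1
  exact bordered_lambdaMax_upper_LiLi_general hM hAh fun i =>
    hlam1 ▸ le_ciSup (Set.finite_range hM.eigenvalues).bddAbove i
end

section
/- Let d be a positive integer, M ∈ ℂ^{d×d} an Hermitian matrix with largest eigenvalue λ₁, c ∈ ℝ with c ≠ λ₁, and a ∈ ℂ^d. Let A be the (d+1)×(d+1) Hermitian bordered matrix A = [[c, a*], [a, M]]. Then λ_max(A) ≤ max(c, λ₁) + ‖a‖₂² / |λ₁ − c|. -/
/-!
For a vector with blocks `x` and `v`, Cauchy–Schwarz and the Rayleigh bound `v* M v ≤ λ₁ ‖v‖²`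
dominate the quadratic form of the bordered matrix by `c |x|² + 2 ‖a‖ |x| ‖v‖ + λ₁ ‖v‖²`, and
AM–GM bounds this by `t (|x|² + ‖v‖²)` as soon as `c, λ₁ ≤ t` and `‖a‖² ≤ (t - c) (t - λ₁)`.
For `t = max c λ₁ + ‖a‖² / |λ₁ - c|` the two factors are `‖a‖² / |λ₁ - c|` and
`‖a‖² / |λ₁ - c| + |λ₁ - c|`, whose product is at least `‖a‖²`.
-/

section

open Matrix RCLike WithLp

variable {𝕜 ι : Type*} [RCLike 𝕜] [Fintype ι]

open scoped MatrixOrder ComplexOrder in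
theorem eigenvalues_le_iff_forall_re_dotProduct_mulVec_le [DecidableEq ι] {M : Matrix ι ι 𝕜}
    (hM : M.IsHermitian) {r : ℝ} :
    (∀ i, hM.eigenvalues i ≤ r) ↔
      ∀ v : EuclideanSpace 𝕜 ι, re (star v.ofLp ⬝ᵥ M *ᵥ v.ofLp) ≤ r * ‖v‖ ^ 2 := by
  refine ⟨fun h v => ?_, fun h i => ?_⟩
  · have hMr : M ≤ algebraMap ℝ _ r := by
      refine le_algebraMap_of_spectrum_le ?_ hM.isSelfAdjoint
      rwa [hM.spectrum_real_eq_range_eigenvalues, Set.forall_mem_range]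
    have hnorm : re (star v.ofLp ⬝ᵥ v.ofLp) = ‖v‖ ^ 2 := by
      rw [dotProduct_comm, ← EuclideanSpace.inner_eq_star_dotProduct, inner_self_eq_norm_sq]
    have hnonneg := (Matrix.le_iff.mp hMr).re_dotProduct_nonneg v.ofLp
    rwa [sub_mulVec, dotProduct_sub, Algebra.algebraMap_eq_smul_one, smul_mulVec, one_mulVec,
      dotProduct_smul, map_sub, smul_re, hnorm, sub_nonneg] at hnonneg
  · have hi := h (hM.eigenvectorBasis i)
    rwa [← hM.eigenvalues_eq, hM.eigenvectorBasis.norm_eq_one, one_pow, mul_one] at hi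

/-- The bordered matrix `[[c, a*], [a, M]]` with real corner `c`. The row and column of the border
are indexed by `Unit`, so that `Unit ⊕ ι` plays the role of `d + 1` indices. -/
def bordered (c : ℝ) (a : EuclideanSpace 𝕜 ι) (M : Matrix ι ι 𝕜) :
    Matrix (Unit ⊕ ι) (Unit ⊕ ι) 𝕜 :=
  fromBlocks (of fun _ _ => (c : 𝕜)) (of fun _ j => star (a j)) (of fun i _ => a i) M

theorem bordered_mulVec (c : ℝ) (a : EuclideanSpace 𝕜 ι) (M : Matrix ι ι 𝕜) (x : 𝕜)
    (v : EuclideanSpace 𝕜 ι) :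
    bordered c a M *ᵥ Sum.elim (fun _ => x) v.ofLp =
      Sum.elim (fun _ => c * x + inner 𝕜 a v) (x • a.ofLp + M *ᵥ v.ofLp) := by
  rw [bordered, fromBlocks_mulVec]
  congr 1 <;> ext <;> simp [mulVec, dotProduct, PiLp.inner_apply, mul_comm]

theorem re_dotProduct_bordered_mulVec (c : ℝ) (a : EuclideanSpace 𝕜 ι) (M : Matrix ι ι 𝕜) (x : 𝕜)
    (v : EuclideanSpace 𝕜 ι) :
    re (star (Sum.elim (fun _ : Unit => x) v.ofLp) ⬝ᵥ
        bordered c a M *ᵥ Sum.elim (fun _ => x) v.ofLp) =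
      c * ‖x‖ ^ 2 + 2 * re (inner 𝕜 (x • a) v) + re (star v.ofLp ⬝ᵥ M *ᵥ v.ofLp) := by
  have hrow : re (star (fun _ : Unit => x) ⬝ᵥ fun _ => c * x + inner 𝕜 a v) =
      c * ‖x‖ ^ 2 + re (inner 𝕜 (x • a) v) := by
    rw [dotProduct, Fintype.sum_unique, Pi.star_apply, mul_add, mul_left_comm, map_add,
      re_ofReal_mul, inner_smul_left, star_def, RCLike.conj_mul, ← ofReal_pow, ofReal_re]
  have hcolumn : re (star v.ofLp ⬝ᵥ x • a.ofLp) = re (inner 𝕜 (x • a) v) := by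
    rw [inner_re_symm, EuclideanSpace.inner_eq_star_dotProduct, dotProduct_comm, ofLp_smul]
  rw [bordered_mulVec, Function.star_sumElim, sumElim_dotProduct_sumElim, dotProduct_add,
    map_add, map_add, hrow, hcolumn]
  ring

theorem re_dotProduct_bordered_mulVec_le {c r : ℝ} {M : Matrix ι ι 𝕜} (a v : EuclideanSpace 𝕜 ι)
    (x : 𝕜) (hv : re (star v.ofLp ⬝ᵥ M *ᵥ v.ofLp) ≤ r * ‖v‖ ^ 2) :
    re (star (Sum.elim (fun _ : Unit => x) v.ofLp) ⬝ᵥ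
        bordered c a M *ᵥ Sum.elim (fun _ => x) v.ofLp) ≤
      c * ‖x‖ ^ 2 + 2 * (‖a‖ * ‖x‖ * ‖v‖) + r * ‖v‖ ^ 2 := by
  have hcross : re (inner 𝕜 (x • a) v) ≤ ‖a‖ * ‖x‖ * ‖v‖ :=
    (re_inner_le_norm _ _).trans_eq (by rw [norm_smul, mul_comm ‖x‖])
  rw [re_dotProduct_bordered_mulVec]
  gcongr

theorem binary_quadratic_form_le {R : Type*} [CommRing R] [LinearOrder R] [IsStrictOrderedRing R]
    {c r t b : R} (hc : c ≤ t) (hr : r ≤ t) (hb : b ^ 2 ≤ (t - c) * (t - r)) (x y : R) :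
    c * x ^ 2 + 2 * (b * x * y) + r * y ^ 2 ≤ t * (x ^ 2 + y ^ 2) := by
  have hsq : (b * x * y) ^ 2 ≤ (t - c) * x ^ 2 * ((t - r) * y ^ 2) :=
    calc (b * x * y) ^ 2 = b ^ 2 * (x ^ 2 * y ^ 2) := by ring
      _ ≤ (t - c) * (t - r) * (x ^ 2 * y ^ 2) := by gcongr
      _ = (t - c) * x ^ 2 * ((t - r) * y ^ 2) := by ring
  have hcross := two_mul_le_add_of_sq_le_mul (mul_nonneg (sub_nonneg.mpr hc) (sq_nonneg x))
    (mul_nonneg (sub_nonneg.mpr hr) (sq_nonneg y)) hsq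
  linarith

theorem eigenvalues_bordered_le [DecidableEq ι] {M : Matrix ι ι 𝕜} (hM : M.IsHermitian)
    {c r t : ℝ} (hMr : ∀ i, hM.eigenvalues i ≤ r) {a : EuclideanSpace 𝕜 ι} (hct : c ≤ t)
    (hrt : r ≤ t) (ha : ‖a‖ ^ 2 ≤ (t - c) * (t - r)) (hA : (bordered c a M).IsHermitian)
    (i : Unit ⊕ ι) : hA.eigenvalues i ≤ t := by
  refine (eigenvalues_le_iff_forall_re_dotProduct_mulVec_le hA).mpr (fun w => ?_) i
  obtain ⟨x, v, rfl⟩ : ∃ (x : 𝕜) (v : EuclideanSpace 𝕜 ι),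
      w = toLp 2 (Sum.elim (fun _ => x) v.ofLp) :=
    ⟨w (.inl ()), toLp 2 fun j => w (.inr j), by ext (_ | _) <;> rfl⟩
  have hnorm : ‖toLp 2 (Sum.elim (fun _ : Unit => x) v.ofLp)‖ ^ 2 = ‖x‖ ^ 2 + ‖v‖ ^ 2 := by
    simp [EuclideanSpace.norm_sq_eq]
  rw [hnorm]
  exact (re_dotProduct_bordered_mulVec_le a v x
    ((eigenvalues_le_iff_forall_re_dotProduct_mulVec_le hM).mp hMr v)).trans
    (binary_quadratic_form_le hct hrt ha ‖x‖ ‖v‖)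

theorem le_max_add_div_abs_sub_mul_sub {K : Type*} [Field K] [LinearOrder K]
    [IsStrictOrderedRing K] (s : K) {c r : K} (hcr : c ≠ r) :
    s ≤ (max c r + s / |r - c| - c) * (max c r + s / |r - c| - r) := by
  set q := s / |r - c|
  have hs : |r - c| * q = s := mul_div_cancel₀ s (abs_ne_zero.mpr (sub_ne_zero.mpr hcr.symm))
  calc s ≤ s + q ^ 2 := le_add_of_nonneg_right (sq_nonneg q)
    _ = (max c r - min c r + q) * q := by rw [max_sub_min_eq_abs, add_mul, hs, sq]
    _ = (max c r + q - c) * (max c r + q - r) := by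
      linear_combination (-(max c r + q)) * max_add_min c r + max_mul_min c r

theorem bordered_lambdaMax_le_mathias_general [DecidableEq ι] {M : Matrix ι ι 𝕜}
    (hM : M.IsHermitian) {c r : ℝ} (hMr : ∀ i, hM.eigenvalues i ≤ r) (hcr : c ≠ r)
    (a : EuclideanSpace 𝕜 ι) (hA : (bordered c a M).IsHermitian) :
    (⨆ i, hA.eigenvalues i) ≤ max c r + ‖a‖ ^ 2 / |r - c| := by
  have hq : 0 ≤ ‖a‖ ^ 2 / |r - c| := by positivity
  refine ciSup_le (eigenvalues_bordered_le hM hMr ?_ ?_ ?_ hA)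
  · exact (le_max_left c r).trans (le_add_of_nonneg_right hq)
  · exact (le_max_right c r).trans (le_add_of_nonneg_right hq)
  · exact le_max_add_div_abs_sub_mul_sub _ hcr

end

/-- **Mathias-type bound.** With `A = [[c, a*], [a, M]]`, `λ₁ = λ_max(M)` and `c ≠ λ₁`:
`λ_max(A) ≤ max (c, λ₁) + ‖a‖₂² / |λ₁ − c|`. -/
theorem bordered_lambdaMax_le_mathias
    (d : ℕ) (hd : 0 < d)
    (M : Matrix (Fin d) (Fin d) ℂ) (hM : M.IsHermitian)
    (c : ℝ) (a : EuclideanSpace ℂ (Fin d))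
    (lam1 : ℝ) (hlam1 : lam1 = ⨆ i, hM.eigenvalues i)
    (hc : c ≠ lam1)
    (A : Matrix (Unit ⊕ Fin d) (Unit ⊕ Fin d) ℂ)
    (hA : A = Matrix.fromBlocks (Matrix.of fun _ _ => (c : ℂ))
        (Matrix.of fun _ j => star (a j)) (Matrix.of fun i _ => a i) M)
    (hAh : A.IsHermitian) :
    (⨆ i, hAh.eigenvalues i) ≤ max c lam1 + ‖a‖ ^ 2 / |lam1 - c| := by
  subst hA
  exact bordered_lambdaMax_le_mathias_general hM (fun i => hlam1 ▸ Finite.le_ciSup _ i) hc a hAh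
end

section
/- Let d be a positive integer, M ∈ ℂ^{d×d} a nonzero Hermitian matrix, c ∈ ℝ, and a ∈ ℂ^d. Let A be the (d+1)×(d+1) Hermitian bordered matrix A = [[c, a*], [a, M]]. Then ‖A‖ ≤ ‖M‖ + |c|/2 + (‖a‖₂² + c²/8) / ‖M‖. -/
/-!
Applied to `(u, v)`, a block matrix `[[A, B], [C, D]]` yields a vector whose components have norms
at most the entries of `[[‖A‖, β], [β, ‖D‖]] (‖u‖, ‖v‖)`, where `β = max ‖B‖ ‖C‖`. If `K` is at
least `‖A‖` and `‖D‖` and `β² ≤ (K - ‖A‖) (K - ‖D‖)`, then Cauchy–Schwarz in each row, with weights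
`(‖A‖, K - ‖A‖)` and `(K - ‖D‖, ‖D‖)` summing to `K`, shows that this real `2 × 2` matrix has norm
at most `K`. The value `K = ‖D‖ + ‖A‖ / 2 + (β² + ‖A‖² / 8) / ‖D‖` qualifies.
-/

section TwoByTwo

lemma add_mul_sq_le_of_sq_le_mul {R : Type*} [CommRing R] [LinearOrder R] [IsStrictOrderedRing R]
    {s r t β : R} (hs : 0 ≤ s) (hr : 0 ≤ r) (ht : 0 ≤ t) (hβ : β ^ 2 ≤ r * t) (p q : R) :
    (s * p + β * q) ^ 2 ≤ (s + r) * (s * p ^ 2 + t * q ^ 2) := by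
  have hoff : (β * q) ^ 2 ≤ r * (t * q ^ 2) := by
    rw [mul_pow, ← mul_assoc]
    exact mul_le_mul_of_nonneg_right hβ (sq_nonneg q)
  have hdiag : (s * p) ^ 2 ≤ s * (s * p ^ 2) := by
    rw [mul_pow, sq s, mul_assoc]
  have hcs := Finset.univ.sum_sq_le_sum_mul_sum_of_sq_le_mul
    (r := ![s * p, β * q]) (f := ![s, r]) (g := ![s * p ^ 2, t * q ^ 2])
  simp only [Finset.mem_univ, forall_const, Fin.forall_fin_two, Fin.sum_univ_two,
    Matrix.cons_val_zero, Matrix.cons_val_one] at hcs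
  exact hcs ⟨hs, hr⟩ ⟨by positivity, by positivity⟩ ⟨hdiag, hoff⟩

lemma sq_add_sq_le_of_sq_le_sub_mul_sub {R : Type*}
    [CommRing R] [LinearOrder R] [IsStrictOrderedRing R] {α β δ K : R}
    (hα : 0 ≤ α) (hδ : 0 ≤ δ) (hαK : α ≤ K) (hδK : δ ≤ K) (hβ : β ^ 2 ≤ (K - α) * (K - δ))
    (p q : R) :
    (α * p + β * q) ^ 2 + (β * p + δ * q) ^ 2 ≤ K ^ 2 * (p ^ 2 + q ^ 2) := by
  have hfst : (α * p + β * q) ^ 2 ≤ K * (α * p ^ 2 + (K - δ) * q ^ 2) := by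
    simpa using add_mul_sq_le_of_sq_le_mul hα (sub_nonneg.2 hαK) (sub_nonneg.2 hδK) hβ p q
  have hsnd : (δ * q + β * p) ^ 2 ≤ K * (δ * q ^ 2 + (K - α) * p ^ 2) := by
    rw [mul_comm] at hβ
    simpa using add_mul_sq_le_of_sq_le_mul hδ (sub_nonneg.2 hδK) (sub_nonneg.2 hαK) hβ q p
  linear_combination hfst + hsnd

lemma half_le_add_sq_div {F : Type*} [Field F] [LinearOrder F] [IsStrictOrderedRing F]
    (α : F) {δ : F} (hδ : 0 < δ) : α / 2 ≤ δ + α ^ 2 / 8 / δ := by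
  have h : δ + α ^ 2 / 8 / δ - α / 2 = ((δ - α / 4) ^ 2 + (α / 4) ^ 2) / δ := by
    field_simp
    ring
  rw [← sub_nonneg, h]
  positivity

lemma sq_le_bordered_sub_mul_sub {F : Type*} [Field F] [LinearOrder F] [IsStrictOrderedRing F]
    {α δ : F} (β : F) (hα : 0 ≤ α) (hδ : 0 < δ) :
    β ^ 2 ≤ (δ + α / 2 + (β ^ 2 + α ^ 2 / 8) / δ - α) *
      (δ + α / 2 + (β ^ 2 + α ^ 2 / 8) / δ - δ) := by
  have hgap : 0 ≤ δ + α ^ 2 / 8 / δ - α / 2 := sub_nonneg.2 (half_le_add_sq_div α hδ)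
  have hβ : β ^ 2 = β ^ 2 / δ * δ := (div_mul_cancel₀ _ hδ.ne').symm
  have hs : 0 ≤ β ^ 2 / δ := by positivity
  have ht : 0 ≤ α ^ 2 / 8 / δ := by positivity
  rw [add_div]
  generalize β ^ 2 / δ = s at *
  generalize α ^ 2 / 8 / δ = t at *
  have hrest : 0 ≤ 2 * (s * t) + s ^ 2 + (δ + t - α / 2) * (α / 2 + t) := by positivity
  linear_combination hβ + hrest

end TwoByTwo

section BlockMatrix

open Matrix WithLp
open scoped Matrix.Norms.L2Operator

lemma norm_toLp_sumElim_sq {ι κ E : Type*} [Fintype ι] [Fintype κ] [SeminormedAddCommGroup E]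
    (u : ι → E) (v : κ → E) :
    ‖toLp 2 (Sum.elim u v)‖ ^ 2 = ‖toLp 2 u‖ ^ 2 + ‖toLp 2 v‖ ^ 2 := by
  simp only [PiLp.norm_sq_eq_of_L2, Fintype.sum_sum_type, Sum.elim_inl, Sum.elim_inr]

lemma norm_toLp_of_unique {ι E : Type*} [Fintype ι] [Unique ι] [SeminormedAddCommGroup E]
    (x : ι → E) : ‖toLp 2 x‖ = ‖x default‖ := by
  rw [← sq_eq_sq₀ (norm_nonneg _) (norm_nonneg _), PiLp.norm_sq_eq_of_L2, Fintype.sum_unique]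

variable {𝕜 : Type*} [RCLike 𝕜]
variable {l m n o : Type*} [Fintype l] [Fintype m] [Fintype n] [Fintype o]

lemma norm_toLp_mulVec_le [DecidableEq n] (A : Matrix m n 𝕜) (x : n → 𝕜) :
    ‖toLp 2 (A *ᵥ x)‖ ≤ ‖A‖ * ‖toLp 2 x‖ :=
  A.l2_opNorm_mulVec (toLp 2 x)

lemma l2_opNorm_le_of_norm_mulVec_le [DecidableEq n] {A : Matrix m n 𝕜} {K : ℝ} (hK : 0 ≤ K)
    (h : ∀ x : n → 𝕜, ‖toLp 2 (A *ᵥ x)‖ ≤ K * ‖toLp 2 x‖) : ‖A‖ ≤ K :=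
  ContinuousLinearMap.opNorm_le_bound _ hK fun x ↦ h (ofLp x)

lemma norm_toLp_mulVec_add_mulVec_le [DecidableEq l] [DecidableEq n] {A : Matrix m l 𝕜}
    {B : Matrix m n 𝕜} {α β : ℝ} (hA : ‖A‖ ≤ α) (hB : ‖B‖ ≤ β) (u : l → 𝕜) (v : n → 𝕜) :
    ‖toLp 2 (A *ᵥ u + B *ᵥ v)‖ ≤ α * ‖toLp 2 u‖ + β * ‖toLp 2 v‖ := by
  rw [toLp_add]
  grw [norm_add_le, norm_toLp_mulVec_le, norm_toLp_mulVec_le, hA, hB]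

lemma l2_opNorm_fromBlocks_le [DecidableEq l] [DecidableEq n] {A : Matrix m l 𝕜}
    {B : Matrix m n 𝕜} {C : Matrix o l 𝕜} {D : Matrix o n 𝕜} {β K : ℝ}
    (hB : ‖B‖ ≤ β) (hC : ‖C‖ ≤ β) (hA : ‖A‖ ≤ K) (hD : ‖D‖ ≤ K)
    (hβ : β ^ 2 ≤ (K - ‖A‖) * (K - ‖D‖)) :
    ‖fromBlocks A B C D‖ ≤ K := by
  have hK : 0 ≤ K := (norm_nonneg A).trans hA
  refine l2_opNorm_le_of_norm_mulVec_le hK fun x ↦ ?_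
  obtain ⟨u, v, rfl⟩ : ∃ u v, x = Sum.elim u v := ⟨_, _, (Sum.elim_comp_inl_inr x).symm⟩
  refine le_of_sq_le_sq ?_ (by positivity)
  rw [fromBlocks_mulVec, Sum.elim_comp_inl, Sum.elim_comp_inr]
  calc ‖toLp 2 (Sum.elim (A *ᵥ u + B *ᵥ v) (C *ᵥ u + D *ᵥ v))‖ ^ 2
      = ‖toLp 2 (A *ᵥ u + B *ᵥ v)‖ ^ 2 + ‖toLp 2 (C *ᵥ u + D *ᵥ v)‖ ^ 2 :=
        norm_toLp_sumElim_sq _ _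
    _ ≤ (‖A‖ * ‖toLp 2 u‖ + β * ‖toLp 2 v‖) ^ 2 + (β * ‖toLp 2 u‖ + ‖D‖ * ‖toLp 2 v‖) ^ 2 := by
        gcongr
        · exact norm_toLp_mulVec_add_mulVec_le le_rfl hB u v
        · exact norm_toLp_mulVec_add_mulVec_le hC le_rfl u v
    _ ≤ K ^ 2 * (‖toLp 2 u‖ ^ 2 + ‖toLp 2 v‖ ^ 2) :=
        sq_add_sq_le_of_sq_le_sub_mul_sub (norm_nonneg A) (norm_nonneg D) hA hD hβ _ _
    _ = (K * ‖toLp 2 (Sum.elim u v)‖) ^ 2 := by rw [mul_pow, norm_toLp_sumElim_sq]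

lemma l2_opNorm_replicateCol {ι : Type*} [Unique ι] [DecidableEq ι] (v : m → 𝕜) :
    ‖replicateCol ι v‖ = ‖toLp 2 v‖ := by
  have hmulVec (x : ι → 𝕜) : toLp 2 (replicateCol ι v *ᵥ x) = x default • toLp 2 v := by
    ext i
    simp [mulVec, dotProduct, mul_comm]
  apply le_antisymm
  · refine l2_opNorm_le_of_norm_mulVec_le (norm_nonneg _) fun x ↦ ?_
    rw [hmulVec, norm_smul, mul_comm, norm_toLp_of_unique x]
  · simpa [hmulVec, norm_toLp_of_unique] using norm_toLp_mulVec_le (replicateCol ι v) 1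

lemma l2_opNorm_replicateRow_star {ι : Type*} [Unique ι] [DecidableEq n] (v : n → 𝕜) :
    ‖replicateRow ι (star v)‖ = ‖toLp 2 v‖ := by
  classical
  rw [← conjTranspose_replicateCol, l2_opNorm_conjTranspose, l2_opNorm_replicateCol]

theorem bordered_opNorm_le_third_general [DecidableEq l] [DecidableEq n] (A : Matrix m l 𝕜)
    (B : Matrix m n 𝕜) (C : Matrix o l 𝕜) {D : Matrix o n 𝕜} (hD : D ≠ 0) :
    ‖fromBlocks A B C D‖ ≤
      ‖D‖ + ‖A‖ / 2 + (max ‖B‖ ‖C‖ ^ 2 + ‖A‖ ^ 2 / 8) / ‖D‖ := by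
  have hD_pos : 0 < ‖D‖ := norm_pos_iff.2 hD
  refine l2_opNorm_fromBlocks_le (le_max_left _ _) (le_max_right _ _) ?_ ?_
    (sq_le_bordered_sub_mul_sub _ (norm_nonneg A) hD_pos)
  · have hA := half_le_add_sq_div ‖A‖ hD_pos
    have hBC : 0 ≤ max ‖B‖ ‖C‖ ^ 2 / ‖D‖ := by positivity
    rw [add_div]
    linarith
  · rw [add_assoc]
    exact le_add_of_nonneg_right (by positivity)

end BlockMatrix

/-- **Operator-norm bound after bordering (third form).**
With `A = [[c, a*], [a, M]]`, `M ≠ 0`, and `‖·‖` the `ℓ²`-operator (spectral) norm: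
`‖A‖ ≤ ‖M‖ + |c|/2 + (‖a‖₂² + c²/8) / ‖M‖`. -/
theorem bordered_opNorm_le_third
    (d : ℕ) (hd : 0 < d)
    (M : Matrix (Fin d) (Fin d) ℂ) (hM : M.IsHermitian) (hM0 : M ≠ 0)
    (c : ℝ) (a : EuclideanSpace ℂ (Fin d))
    (A : Matrix (Unit ⊕ Fin d) (Unit ⊕ Fin d) ℂ)
    (hA : A = Matrix.fromBlocks (Matrix.of fun _ _ => (c : ℂ))
        (Matrix.of fun _ j => star (a j)) (Matrix.of fun i _ => a i) M) :
    ‖Matrix.toEuclideanCLM (𝕜 := ℂ) A‖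
      ≤ ‖Matrix.toEuclideanCLM (𝕜 := ℂ) M‖ + |c| / 2
        + (‖a‖ ^ 2 + c ^ 2 / 8) / ‖Matrix.toEuclideanCLM (𝕜 := ℂ) M‖ := by
  rw [hA, Matrix.l2_opNorm_toEuclideanCLM]
  refine (bordered_opNorm_le_third_general (Matrix.replicateCol Unit fun _ : Unit ↦ (c : ℂ))
    (Matrix.replicateRow Unit (star a.ofLp)) (Matrix.replicateCol Unit a.ofLp) hM0).trans_eq ?_
  simp [Matrix.l2_opNorm_toEuclideanCLM, l2_opNorm_replicateCol, l2_opNorm_replicateRow_star,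
    norm_toLp_of_unique]
end
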